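/- arXiv:2503.01857 — 4 statements merged into one kernel-verified Lean document; each statement's English description precedes it below -/
import Mathlib

section
/- Let n ≥ 1, let 0 < α ≤ 1, γ > 0, ζ > 0, and let 0 < t_p < t_c < T. Suppose t ∈ (t_c, T), ε : ℝ → ℝⁿ is differentiable in a neighborhood of t, ε is nonvanishing near t, and ε satisfies the maintenance-phase FOZNN dynamics at every point near t. Define V(s) = ‖ε(s)‖/(s − t_p). Then V is differentiable at t with V'(t) ≤ −γ t^{α−1} V(t)²/(t − t_p) − ζ/(t − t_p) < 0. -/
/-!
The dynamics are radial: `ε'(t)` is a real multiple of `ε(t)`, so to first order `ε` moves along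
its own ray and `‖ε‖` is differentiable at `t` whatever the norm, with the same logarithmic rate.
Dividing by `s - t_p` is an integrating factor for the term `ε / (t_p - s)`. What survives is
`V' = -k / (t - t_p)`, where `k = ζ + γ t^(α-1) V²` is the magnitude of the term along `ε / ‖ε‖`;
so the claimed bound is an equality.
-/

open Filter Topology Asymptotics

section NormedSpace

variable {E : Type*} [NormedAddCommGroup E] [NormedSpace ℝ E] {ε : ℝ → E} {t : ℝ}

theorem hasDerivAt_norm_of_hasDerivAt_smul_self {c : ℝ} (hε : HasDerivAt ε (c • ε t) t) :
    HasDerivAt (fun s => ‖ε s‖) (c * ‖ε t‖) t := by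
  rw [hasDerivAt_iff_isLittleO] at hε ⊢
  have factor_nonneg : ∀ᶠ s in 𝓝 t, 0 ≤ 1 + (s - t) * c := by
    have hcont : ContinuousAt (fun s => 1 + (s - t) * c) t := by fun_prop
    exact (hcont.eventually_const_lt (by simp)).mono fun _ => le_of_lt
  refine IsBigO.trans_isLittleO (IsBigO.of_bound' ?_) hε
  filter_upwards [factor_nonneg] with s hs
  calc ‖‖ε s‖ - ‖ε t‖ - (s - t) • (c * ‖ε t‖)‖
      = |‖ε s‖ - ‖(1 + (s - t) * c) • ε t‖| := by
        rw [norm_smul, Real.norm_of_nonneg hs, smul_eq_mul, Real.norm_eq_abs]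
        ring_nf
    _ ≤ ‖ε s - (1 + (s - t) * c) • ε t‖ := abs_norm_sub_norm_le _ _
    _ = ‖ε s - ε t - (s - t) • c • ε t‖ := by
        rw [add_smul, one_smul, mul_smul, sub_add_eq_sub_sub]

theorem hasDerivAt_norm_div_sub_of_radial {a k : ℝ} (hta : t ≠ a) (hεt : ε t ≠ 0)
    (hε : HasDerivAt ε (-((a - t)⁻¹ • ε t + (k * ‖ε t‖⁻¹) • ε t)) t) :
    HasDerivAt (fun s => ‖ε s‖ / (s - a)) (-(k / (t - a))) t := by
  rw [← add_smul, ← neg_smul] at hε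
  have hsub : t - a ≠ 0 := sub_ne_zero.mpr hta
  have hnorm : ‖ε t‖ ≠ 0 := norm_ne_zero_iff.mpr hεt
  have hquot := (hasDerivAt_norm_of_hasDerivAt_smul_self hε).fun_div
    ((hasDerivAt_id' t).sub_const a) hsub
  refine hquot.congr_deriv ?_
  rw [← neg_sub t a]
  field_simp
  ring

theorem foznn_noise_free_maintenance_lyapunov_general {α γ ζ tp : ℝ}
    (hγ : 0 ≤ γ) (hζ : 0 < ζ) (ht : 0 < t) (htp : tp < t) (hεt : ε t ≠ 0)
    (hε : HasDerivAt ε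
      (-((tp - t)⁻¹ • ε t +
         ((ζ + γ * t ^ (α - 1) * ‖ε t‖ ^ 2 / (tp - t) ^ 2) * ‖ε t‖⁻¹) • ε t)) t) :
    HasDerivAt (fun s => ‖ε s‖ / (s - tp))
      (-(γ * t ^ (α - 1) * (‖ε t‖ / (t - tp)) ^ 2 / (t - tp)) - ζ / (t - tp)) t ∧
    -(γ * t ^ (α - 1) * (‖ε t‖ / (t - tp)) ^ 2 / (t - tp)) - ζ / (t - tp) < 0 := by
  have hsub : 0 < t - tp := sub_pos.mpr htp
  constructor
  · refine (hasDerivAt_norm_div_sub_of_radial htp.ne' hεt hε).congr_deriv ?_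
    rw [sub_sq_comm tp t, div_pow]
    ring
  · have hquad : 0 ≤ γ * t ^ (α - 1) * (‖ε t‖ / (t - tp)) ^ 2 / (t - tp) := by positivity
    have hconst : 0 < ζ / (t - tp) := div_pos hζ hsub
    linarith

end NormedSpace

/-- If near `t ∈ (t_c, T)` the map `ε` is nonvanishing and satisfies the
maintenance-phase FOZNN dynamics, then `V(s) = ‖ε(s)‖/(s − t_p)` is differentiable at `t`
with `V'(t) ≤ −γ t^{α−1} V(t)²/(t − t_p) − ζ/(t − t_p) < 0`. -/
theorem foznn_noise_free_maintenance_lyapunov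
    (n : ℕ) (hn : 1 ≤ n) (α γ ζ tp tc T : ℝ)
    (hα0 : 0 < α) (hα1 : α ≤ 1) (hγ : 0 < γ) (hζ : 0 < ζ)
    (htp : 0 < tp) (htptc : tp < tc) (htcT : tc < T)
    (ε : ℝ → EuclideanSpace ℝ (Fin n))
    (t : ℝ) (ht : t ∈ Set.Ioo tc T)
    (hdyn : ∀ᶠ s in nhds t, ε s ≠ 0 ∧
      HasDerivAt ε
        (-((tp - s)⁻¹ • ε s +
           ((ζ + γ * s ^ (α - 1) * ‖ε s‖ ^ 2 / (tp - s) ^ 2) * ‖ε s‖⁻¹) • ε s)) s)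
    (V : ℝ → ℝ) (hV : ∀ s, V s = ‖ε s‖ / (s - tp)) :
    DifferentiableAt ℝ V t ∧
    deriv V t ≤ -(γ * t ^ (α - 1) * (V t) ^ 2 / (t - tp)) - ζ / (t - tp) ∧
    -(γ * t ^ (α - 1) * (V t) ^ 2 / (t - tp)) - ζ / (t - tp) < 0 := by
  obtain rfl : V = fun s => ‖ε s‖ / (s - tp) := funext hV
  obtain ⟨hεt, hε⟩ := hdyn.self_of_nhds
  have htpt : tp < t := htptc.trans ht.1
  obtain ⟨hderiv, hneg⟩ :=
    foznn_noise_free_maintenance_lyapunov_general hγ.le hζ (htp.trans htpt) htpt hεt hε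
  exact ⟨hderiv.differentiableAt, hderiv.deriv.le, hneg⟩
end

section
/- Let n ≥ 1, let 0 < α ≤ 1, γ > 0, t_c > 0, Δ ≥ 0, and let δ : ℝ → ℝⁿ satisfy ‖δ(t)‖ ≤ Δ for all t. Suppose ε : ℝ → ℝⁿ is continuous on [0, t_c) and follows the noise-perturbed FOZNN convergence-phase dynamics with noise δ on (0, t_c). Then ε(t) tends to 0 as t tends to t_c from the left. -/
/-!
The norm of `ε` cannot cross the line `C * (tc - t)` from below once `C` is large: on that line the
damping term `γ * ‖ε t‖ / (tc - t) ^ 2` shrinks the norm at a rate of order `γ * C ^ 2`, uniformly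
up to the singular time, because the weight `t ^ (α - 1) / tc ^ (α - 1)` tends to `1`. This beats
both the slope `C` of the line and the bound on the noise. Hence `‖ε t‖ = O(tc - t)`.
-/

open Set Filter Topology Asymptotics

theorem exists_le_mul_and_add_lt_mul_sq {κ s : ℝ} (hκ : 0 < κ) (hs : 0 < s) (r Δ : ℝ) :
    ∃ C : ℝ, r ≤ C * s ∧ C + Δ < κ * C ^ 2 := by
  have hlin : Tendsto (fun C : ℝ ↦ C * s) atTop atTop := tendsto_id.atTop_mul_const hs
  have hquad : Tendsto (fun C : ℝ ↦ C * (κ * C - 1)) atTop atTop :=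
    tendsto_id.atTop_mul_atTop₀
      (tendsto_atTop_add_const_right _ (-1) (tendsto_id.const_mul_atTop hκ))
  obtain ⟨C, hr, hΔ⟩ := ((hlin.eventually_ge_atTop r).and (hquad.eventually_gt_atTop Δ)).exists
  exact ⟨C, hr, by linarith⟩

section Comparison

variable {E : Type*} [NormedAddCommGroup E] [NormedSpace ℝ E] {f : ℝ → E}

-- To first order `f (x + h) = (1 - h * c) • f x + h • v`, and `1 - h * c ≥ 0` for small `h > 0`.
theorem eventually_slope_norm_lt_of_hasDerivWithinAt {x c r : ℝ} {v : E}
    (hf : HasDerivWithinAt f (-c • f x + v) (Ioi x) x) (hr : -c * ‖f x‖ + ‖v‖ < r) :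
    ∀ᶠ z in 𝓝[>] x, slope (norm ∘ f) x z < r := by
  have hlim : Tendsto (fun z ↦ -c * ‖f x‖ + ‖slope f x z + c • f x‖) (𝓝[>] x)
      (𝓝 (-c * ‖f x‖ + ‖v‖)) := by
    have hslope := (hasDerivWithinAt_iff_tendsto_slope' self_notMem_Ioi).1 hf
    simpa using (hslope.add_const (c • f x)).norm.const_add (-c * ‖f x‖)
  have hpos : ∀ᶠ z in 𝓝[>] x, 0 < 1 - (z - x) * c := by
    have hcont : ContinuousAt (fun z ↦ 1 - (z - x) * c) x := by fun_prop
    exact nhdsWithin_le_nhds (hcont.eventually (lt_mem_nhds (by simp)))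
  filter_upwards [hlim.eventually_lt_const hr, hpos, self_mem_nhdsWithin] with z hz hzc hxz
  have hzx : 0 < z - x := sub_pos.2 hxz
  have hdecomp : f z = (1 - (z - x) * c) • f x + (z - x) • (slope f x z + c • f x) := by
    rw [smul_add, sub_smul_slope, smul_smul, sub_smul, one_smul, vsub_eq_sub]
    abel
  have hnorm : ‖f z‖ ≤ (1 - (z - x) * c) * ‖f x‖ + (z - x) * ‖slope f x z + c • f x‖ := by
    calc ‖f z‖ ≤ ‖(1 - (z - x) * c) • f x‖ + ‖(z - x) • (slope f x z + c • f x)‖ := by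
          conv_lhs => rw [hdecomp]
          exact norm_add_le _ _
      _ = _ := by rw [norm_smul_of_nonneg hzc.le, norm_smul_of_nonneg hzx.le]
  refine lt_of_le_of_lt ?_ hz
  rw [slope_def_field, div_le_iff₀ hzx]
  simp only [Function.comp_apply]
  linarith

variable {v : ℝ → E} {c : ℝ → ℝ}

theorem norm_le_of_hasDerivWithinAt_neg_smul_add {a b : ℝ} {B B' : ℝ → ℝ}
    (hf : ContinuousOn f (Icc a b))
    (hf' : ∀ x ∈ Ico a b, HasDerivWithinAt f (-c x • f x + v x) (Ici x) x)
    (ha : ‖f a‖ ≤ B a) (hB : ContinuousOn B (Icc a b))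
    (hB' : ∀ x ∈ Ico a b, HasDerivWithinAt B (B' x) (Ici x) x)
    (hbound : ∀ x ∈ Ico a b, ‖f x‖ = B x → -c x * B x + ‖v x‖ < B' x) :
    ∀ x ∈ Icc a b, ‖f x‖ ≤ B x :=
  image_norm_le_of_liminf_right_slope_norm_lt_deriv_boundary hf
    (fun x hx _ hr ↦
      (eventually_slope_norm_lt_of_hasDerivWithinAt (hf' x hx).Ioi_of_Ici hr).frequently)
    ha hB hB' fun x hx h ↦ by simpa only [h] using hbound x hx h

theorem norm_le_mul_sub_of_hasDerivAt_neg_smul_add {a T κ C Δ : ℝ}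
    (hf : ∀ t ∈ Ico a T, HasDerivAt f (-c t • f t + v t) t)
    (hc : ∀ t ∈ Ico a T, κ * ‖f t‖ / (T - t) ^ 2 ≤ c t)
    (hv : ∀ t ∈ Ico a T, ‖v t‖ ≤ Δ)
    (ha : ‖f a‖ ≤ C * (T - a)) (hC : C + Δ < κ * C ^ 2) :
    ∀ t ∈ Ico a T, ‖f t‖ ≤ C * (T - t) := by
  intro t ht
  have hsub : Icc a t ⊆ Ico a T := Icc_subset_Ico_right ht.2
  have hline (x : ℝ) : HasDerivAt (fun y ↦ C * (T - y)) (-C) x := by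
    simpa using ((hasDerivAt_id x).const_sub T).const_mul C
  refine norm_le_of_hasDerivWithinAt_neg_smul_add
    (fun x hx ↦ (hf x (hsub hx)).continuousAt.continuousWithinAt)
    (fun x hx ↦ (hf x (hsub (Ico_subset_Icc_self hx))).hasDerivWithinAt) ha
    (fun x _ ↦ (hline x).continuousAt.continuousWithinAt)
    (fun x _ ↦ (hline x).hasDerivWithinAt) (fun x hx hx_eq ↦ ?_) t (right_mem_Icc.2 ht.1)
  have hxT : x ∈ Ico a T := hsub (Ico_subset_Icc_self hx)
  have hgap : 0 < T - x := sub_pos.2 hxT.2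
  have hdamp : κ * C ^ 2 ≤ c x * (C * (T - x)) := by
    calc κ * C ^ 2 = κ * ‖f x‖ / (T - x) ^ 2 * ‖f x‖ := by rw [hx_eq]; field_simp
      _ ≤ c x * ‖f x‖ := mul_le_mul_of_nonneg_right (hc x hxT) (norm_nonneg _)
      _ = c x * (C * (T - x)) := by rw [hx_eq]
  linarith [hv x hxT]

theorem isBigO_sub_of_hasDerivAt_neg_smul_add {T κ Δ : ℝ} (hκ : 0 < κ)
    (hf : ∀ᶠ t in 𝓝[<] T, HasDerivAt f (-c t • f t + v t) t)
    (hc : ∀ᶠ t in 𝓝[<] T, κ * ‖f t‖ / (T - t) ^ 2 ≤ c t)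
    (hv : ∀ᶠ t in 𝓝[<] T, ‖v t‖ ≤ Δ) :
    f =O[𝓝[<] T] fun t ↦ T - t := by
  obtain ⟨a, haT, ha⟩ := mem_nhdsLT_iff_exists_Ico_subset.1 (hf.and (hc.and hv))
  obtain ⟨C, hCa, hC⟩ := exists_le_mul_and_add_lt_mul_sq hκ (sub_pos.2 haT) ‖f a‖ Δ
  have hbound := norm_le_mul_sub_of_hasDerivAt_neg_smul_add (fun t ht ↦ (ha ht).1)
    (fun t ht ↦ (ha ht).2.1) (fun t ht ↦ (ha ht).2.2) hCa hC
  refine IsBigO.of_bound C ?_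
  filter_upwards [Ico_mem_nhdsLT haT] with t ht
  rw [Real.norm_of_nonneg (sub_nonneg.2 ht.2.le)]
  exact hbound t ht

end Comparison

theorem tendsto_rpow_div_rpow_nhds_one {x : ℝ} (hx : 0 < x) (p : ℝ) :
    Tendsto (fun t ↦ t ^ p / x ^ p) (𝓝 x) (𝓝 1) := by
  have h := (Real.continuousAt_rpow_const x p (.inl hx.ne')).tendsto.div_const (x ^ p)
  rwa [div_self (Real.rpow_pos_of_pos hx p).ne'] at h

theorem foznn_noisy_convergence_general {E : Type*} [NormedAddCommGroup E] [NormedSpace ℝ E]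
    {α γ tc Δ : ℝ} (hγ : 0 < γ) (htc : 0 < tc) {δ ε : ℝ → E}
    (hδ : ∀ᶠ t in 𝓝[<] tc, ‖δ t‖ ≤ Δ)
    (hdyn : ∀ᶠ t in 𝓝[<] tc, HasDerivAt ε
      ((-(t ^ (α - 1) / tc ^ (α - 1)) *
        (1 / (tc - t) + γ * ‖ε t‖ / (tc - t) ^ 2)) • ε t + δ t) t) :
    ε =O[𝓝[<] tc] fun t ↦ tc - t := by
  have hweight : ∀ᶠ t in 𝓝[<] tc, 1 / 2 < t ^ (α - 1) / tc ^ (α - 1) :=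
    nhdsWithin_le_nhds
      ((tendsto_rpow_div_rpow_nhds_one htc _).eventually_const_lt one_half_lt_one)
  simp only [neg_mul] at hdyn
  refine isBigO_sub_of_hasDerivAt_neg_smul_add (half_pos hγ) hdyn ?_ hδ
  filter_upwards [hweight, self_mem_nhdsWithin] with t hw ht
  have hgap : 0 < tc - t := sub_pos.2 ht
  calc γ / 2 * ‖ε t‖ / (tc - t) ^ 2 = 1 / 2 * (γ * ‖ε t‖ / (tc - t) ^ 2) := by ring
    _ ≤ t ^ (α - 1) / tc ^ (α - 1) * (1 / (tc - t) + γ * ‖ε t‖ / (tc - t) ^ 2) := by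
      gcongr
      exact le_add_of_nonneg_left (by positivity)

/-- For `ε` continuous on `[0, t_c)` following the noise-perturbed FOZNN
convergence-phase dynamics with bounded noise `δ` on `(0, t_c)`, `ε(t) → 0` as `t → t_c⁻`. -/
theorem foznn_noisy_convergence
    (n : ℕ) (hn : 1 ≤ n) (α γ tc Δ : ℝ)
    (hα0 : 0 < α) (hα1 : α ≤ 1) (hγ : 0 < γ) (htc : 0 < tc) (hΔ : 0 ≤ Δ)
    (δ : ℝ → EuclideanSpace ℝ (Fin n)) (hδ : ∀ t, ‖δ t‖ ≤ Δ)
    (ε : ℝ → EuclideanSpace ℝ (Fin n))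
    (hcont : ContinuousOn ε (Set.Ico 0 tc))
    (hdyn : ∀ t ∈ Set.Ioo (0 : ℝ) tc, ε t ≠ 0 ∧
      HasDerivAt ε
        ((-(t ^ (α - 1) / tc ^ (α - 1)) *
          (1 / (tc - t) + γ * ‖ε t‖ / (tc - t) ^ 2)) • ε t + δ t) t) :
    Filter.Tendsto ε (nhdsWithin tc (Set.Iio tc)) (nhds 0) :=
  (foznn_noisy_convergence_general hγ htc (.of_forall hδ)
    (mem_of_superset (Ioo_mem_nhdsLT htc) fun t ht ↦ (hdyn t ht).2)).trans_tendsto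
    (((continuous_sub_left tc).tendsto' tc 0 (sub_self tc)).mono_left nhdsWithin_le_nhds)
end

section
/- Let n ≥ 1, let 0 < α ≤ 1, γ > 0, t_c > 0, Δ ≥ 0, and let δ : ℝ → ℝⁿ satisfy ‖δ(t)‖ ≤ Δ for all t. Suppose ε : ℝ → ℝⁿ follows the noise-perturbed FOZNN convergence-phase dynamics with noise δ on (0, t_c). Define V(t) = ‖ε(t)‖/(t_c − t). Then for every t ∈ (0, t_c), V is differentiable at t and its derivative satisfies V'(t) ≤ (Δ − γ V(t)²)/(t_c − t). -/
/-!
Put `V = ‖ε‖ / (T - t)`. Since `(1 / (T - t) + γ ‖ε‖ / (T - t)²) ‖ε‖ = V + γ V²`, the norm of `ε`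
decreases at rate at least `V + γ V² - Δ` as soon as the gain in front of the field is at least `1`.
Differentiating the denominator of `V` contributes `+V`, which cancels the linear part of that decay
and leaves `(T - t) V' ≤ Δ - γ V²`. The gain `t ^ (α - 1) / T ^ (α - 1)` is at least `1` because
`α - 1 ≤ 0` and `0 < t ≤ T`.
-/

theorem one_le_rpow_div_rpow_of_nonpos {x y p : ℝ} (hx : 0 < x) (hxy : x ≤ y) (hp : p ≤ 0) :
    1 ≤ x ^ p / y ^ p :=
  (one_le_div₀ (Real.rpow_pos_of_pos (hx.trans_le hxy) p)).2
    (Real.rpow_le_rpow_of_nonpos hx hxy hp)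

theorem hasDerivAt_div_const_sub {𝕜 : Type*} [NontriviallyNormedField 𝕜] {f : 𝕜 → 𝕜}
    {f' a x : 𝕜} (hf : HasDerivAt f f' x) (hx : x ≠ a) :
    HasDerivAt (fun u ↦ f u / (a - u)) ((f' + f x / (a - x)) / (a - x)) x := by
  have hax : a - x ≠ 0 := sub_ne_zero.2 hx.symm
  refine (hf.fun_div ((hasDerivAt_id' x).const_sub a) hax).congr_deriv ?_
  field_simp
  ring

section InnerProductSpace

open scoped RealInnerProductSpace

variable {E : Type*} [NormedAddCommGroup E] [InnerProductSpace ℝ E]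

theorem hasDerivAt_norm_of_ne_zero {f : ℝ → E} {f' : E} {t : ℝ} (hf : HasDerivAt f f' t)
    (h₀ : f t ≠ 0) : HasDerivAt (fun u ↦ ‖f u‖) (⟪f t, f'⟫ / ‖f t‖) t := by
  have h := hf.norm_sq.sqrt (pow_ne_zero 2 (norm_ne_zero_iff.2 h₀))
  simpa only [Real.sqrt_sq (norm_nonneg _), mul_div_mul_left _ _ (two_ne_zero' ℝ)] using h

theorem inner_smul_add_div_norm_le (a : ℝ) (x d : E) :
    ⟪x, a • x + d⟫ / ‖x‖ ≤ a * ‖x‖ + ‖d‖ := by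
  have hradial : ⟪x, a • x⟫ / ‖x‖ = a * ‖x‖ := by
    rw [real_inner_smul_right, real_inner_self_eq_norm_mul_norm, mul_div_assoc, mul_self_div_self]
  have hnoise : ⟪x, d⟫ / ‖x‖ ≤ ‖d‖ :=
    div_le_of_le_mul₀ (norm_nonneg x) (norm_nonneg d)
      ((real_inner_le_norm x d).trans_eq (mul_comm _ _))
  rw [inner_add_right, add_div, hradial]
  gcongr

theorem foznn_noisy_lyapunov_derivative_general {ε : ℝ → E} {d : E} {k γ T Δ t : ℝ}
    (hk : 1 ≤ k) (hγ : 0 ≤ γ) (ht : t < T) (hd : ‖d‖ ≤ Δ) (h₀ : ε t ≠ 0)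
    (hε : HasDerivAt ε ((-k * (1 / (T - t) + γ * ‖ε t‖ / (T - t) ^ 2)) • ε t + d) t) :
    DifferentiableAt ℝ (fun u ↦ ‖ε u‖ / (T - u)) t ∧
      deriv (fun u ↦ ‖ε u‖ / (T - u)) t ≤ (Δ - γ * (‖ε t‖ / (T - t)) ^ 2) / (T - t) := by
  have hT : 0 < T - t := sub_pos.2 ht
  have hV := hasDerivAt_div_const_sub (hasDerivAt_norm_of_ne_zero hε h₀) ht.ne
  refine ⟨hV.differentiableAt, hV.deriv.trans_le ?_⟩
  set v := ‖ε t‖ / (T - t)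
  set c := 1 / (T - t) + γ * ‖ε t‖ / (T - t) ^ 2
  have hdecay : c * ‖ε t‖ = v + γ * v ^ 2 := by
    simp only [c, v]
    field_simp
  gcongr
  calc ⟪ε t, (-k * c) • ε t + d⟫ / ‖ε t‖ + v
      ≤ -k * c * ‖ε t‖ + ‖d‖ + v := by gcongr; exact inner_smul_add_div_norm_le _ _ _
    _ = ‖d‖ - k * (v + γ * v ^ 2) + v := by rw [← hdecay]; ring
    _ ≤ Δ - 1 * (v + γ * v ^ 2) + v := by gcongr
    _ = Δ - γ * v ^ 2 := by ring

end InnerProductSpace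

/-- For `ε` following the noise-perturbed FOZNN convergence-phase dynamics
with bounded noise `δ` on `(0, t_c)` and `V(t) = ‖ε(t)‖/(t_c − t)`, for every
`t ∈ (0, t_c)` the function `V` is differentiable at `t` with
`V'(t) ≤ (Δ − γ V(t)²)/(t_c − t)`. -/
theorem foznn_noisy_lyapunov_derivative
    (n : ℕ) (hn : 1 ≤ n) (α γ tc Δ : ℝ)
    (hα0 : 0 < α) (hα1 : α ≤ 1) (hγ : 0 < γ) (htc : 0 < tc) (hΔ : 0 ≤ Δ)
    (δ : ℝ → EuclideanSpace ℝ (Fin n)) (hδ : ∀ t, ‖δ t‖ ≤ Δ)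
    (ε : ℝ → EuclideanSpace ℝ (Fin n))
    (hdyn : ∀ t ∈ Set.Ioo (0 : ℝ) tc, ε t ≠ 0 ∧
      HasDerivAt ε
        ((-(t ^ (α - 1) / tc ^ (α - 1)) *
          (1 / (tc - t) + γ * ‖ε t‖ / (tc - t) ^ 2)) • ε t + δ t) t)
    (V : ℝ → ℝ) (hV : ∀ t, V t = ‖ε t‖ / (tc - t)) :
    ∀ t ∈ Set.Ioo (0 : ℝ) tc,
      DifferentiableAt ℝ V t ∧
      deriv V t ≤ (Δ - γ * (V t) ^ 2) / (tc - t) := by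
  obtain rfl : V = fun t ↦ ‖ε t‖ / (tc - t) := funext hV
  exact fun t ht ↦ foznn_noisy_lyapunov_derivative_general
    (one_le_rpow_div_rpow_of_nonpos ht.1 ht.2.le (sub_nonpos.2 hα1)) hγ.le ht.2 (hδ t)
    (hdyn t ht).1 (hdyn t ht).2
end

section
/- Let n ≥ 1, let 0 < α ≤ 1, γ > 0, 0 ≤ Δ < ζ, and 0 < t_p < t_c < T. Let δ : ℝ → ℝⁿ satisfy ‖δ(t)‖ ≤ Δ for all t. Suppose t ∈ (t_c, T), ε : ℝ → ℝⁿ is differentiable and nonvanishing in a neighborhood of t, and in that neighborhood ε'(s) equals the maintenance-phase FOZNN right-hand side at s plus δ(s). Define V(s) = ‖ε(s)‖/(s − t_p). Then V is differentiable at t with V'(t) ≤ −γ t^{α−1} V(t)²/(t − t_p) − (ζ − Δ)/(t − t_p) < 0. -/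
/-!
The noiseless right-hand side is a scalar multiple of `ε`. The differential of the norm at `ε t`
maps `ε t` to `‖ε t‖` and has operator norm at most one, so the derivative of `‖ε‖` is explicit up
to a noise term of size at most `Δ`. The summand `-ε / (t_p - t)` makes `‖ε‖` grow at rate
`‖ε t‖ / (t - t_p)`, which the derivative of the factor `1 / (s - t_p)` in `V` cancels exactly.
-/

section Normed

variable {E : Type*} [NormedAddCommGroup E] [NormedSpace ℝ E]

/-- The maintenance-phase FOZNN right-hand side at time `s` and state `x`. The real number `g` is
the value of the gain, `γ s ^ (α - 1)` in the paper, at time `s`. -/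
noncomputable def foznnMaintenanceField (ζ g tp s : ℝ) (x : E) : E :=
  -((tp - s)⁻¹ • x + ((ζ + g * ‖x‖ ^ 2 / (tp - s) ^ 2) * ‖x‖⁻¹) • x)

/-- The Lyapunov function `V` of the maintenance phase along the error trajectory `ε`. -/
noncomputable def foznnLyapunov (tp : ℝ) (ε : ℝ → E) (s : ℝ) : ℝ :=
  ‖ε s‖ / (s - tp)

theorem fderiv_norm_apply_le_norm (x v : E) : fderiv ℝ (‖·‖) x v ≤ ‖v‖ := by
  have hnorm : ‖fderiv ℝ (‖·‖ : E → ℝ) x‖ ≤ 1 :=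
    NNReal.coe_one ▸ norm_fderiv_le_of_lipschitz ℝ lipschitzWith_one_norm
  calc fderiv ℝ (‖·‖) x v ≤ ‖fderiv ℝ (‖·‖ : E → ℝ) x v‖ := Real.le_norm_self _
    _ ≤ 1 * ‖v‖ := ContinuousLinearMap.le_of_opNorm_le _ hnorm v
    _ = ‖v‖ := one_mul _

theorem fderiv_norm_foznnMaintenanceField {x : E} (hx : x ≠ 0)
    (hdiff : DifferentiableAt ℝ (‖·‖) x) (ζ g tp s : ℝ) :
    fderiv ℝ (‖·‖) x (foznnMaintenanceField ζ g tp s x) =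
      ‖x‖ / (s - tp) - ζ - g * (‖x‖ / (s - tp)) ^ 2 := by
  have hradial : foznnMaintenanceField ζ g tp s x =
      -((tp - s)⁻¹ + (ζ + g * ‖x‖ ^ 2 / (tp - s) ^ 2) * ‖x‖⁻¹) • x := by
    rw [foznnMaintenanceField, neg_smul, add_smul]
  rw [hradial, map_smul, hdiff.fderiv_norm_self, smul_eq_mul, neg_mul, add_mul,
    inv_mul_cancel_right₀ (norm_ne_zero_iff.mpr hx), ← neg_sub s tp, inv_neg, neg_sq, div_pow]
  ring

theorem hasDerivAt_foznnLyapunov {ζ g tp t : ℝ} (ht : t ≠ tp) {ε : ℝ → E} {d : E}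
    (hne : ε t ≠ 0) (hdiff : DifferentiableAt ℝ (‖·‖) (ε t))
    (hdyn : HasDerivAt ε (foznnMaintenanceField ζ g tp t (ε t) + d) t) :
    HasDerivAt (foznnLyapunov tp ε)
      (-(g * foznnLyapunov tp ε t ^ 2 / (t - tp)) -
        (ζ - fderiv ℝ (‖·‖) (ε t) d) / (t - tp)) t := by
  have ht' : t - tp ≠ 0 := sub_ne_zero.mpr ht
  have hnorm := hdiff.hasFDerivAt.comp_hasDerivAt t hdyn
  rw [map_add, fderiv_norm_foznnMaintenanceField hne hdiff] at hnorm
  refine (hnorm.div ((hasDerivAt_id t).sub_const tp) ht').congr_deriv ?_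
  simp only [foznnLyapunov, Function.comp_apply, id_eq]
  field_simp
  ring

theorem foznn_noisy_maintenance_lyapunov_general {g ζ Δ tp t : ℝ} (hg : 0 ≤ g) (hΔζ : Δ < ζ)
    (ht : tp < t) {ε : ℝ → E} {d : E} (hd : ‖d‖ ≤ Δ) (hne : ε t ≠ 0)
    (hdiff : DifferentiableAt ℝ (‖·‖) (ε t))
    (hdyn : HasDerivAt ε (foznnMaintenanceField ζ g tp t (ε t) + d) t) :
    DifferentiableAt ℝ (foznnLyapunov tp ε) t ∧
    deriv (foznnLyapunov tp ε) t ≤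
      -(g * foznnLyapunov tp ε t ^ 2 / (t - tp)) - (ζ - Δ) / (t - tp) ∧
    -(g * foznnLyapunov tp ε t ^ 2 / (t - tp)) - (ζ - Δ) / (t - tp) < 0 := by
  have hpos : 0 < t - tp := sub_pos.mpr ht
  have hV := hasDerivAt_foznnLyapunov ht.ne' hne hdiff hdyn
  refine ⟨hV.differentiableAt, ?_, ?_⟩
  · have hnoise : fderiv ℝ (‖·‖) (ε t) d ≤ Δ := (fderiv_norm_apply_le_norm _ _).trans hd
    rw [hV.deriv]
    gcongr
  · have hquad : 0 ≤ g * foznnLyapunov tp ε t ^ 2 / (t - tp) := by positivity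
    have hmargin : 0 < (ζ - Δ) / (t - tp) := div_pos (sub_pos.mpr hΔζ) hpos
    linarith

end Normed

/-- If near `t ∈ (t_c, T)` the map `ε` is nonvanishing and its derivative
equals the maintenance-phase FOZNN right-hand side plus a noise `δ` bounded by `Δ < ζ`,
then `V(s) = ‖ε(s)‖/(s − t_p)` is differentiable at `t` with
`V'(t) ≤ −γ t^{α−1} V(t)²/(t − t_p) − (ζ − Δ)/(t − t_p) < 0`. -/
theorem foznn_noisy_maintenance_lyapunov
    (n : ℕ) (hn : 1 ≤ n) (α γ ζ Δ tp tc T : ℝ)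
    (hα0 : 0 < α) (hα1 : α ≤ 1) (hγ : 0 < γ)
    (hΔ0 : 0 ≤ Δ) (hΔζ : Δ < ζ)
    (htp : 0 < tp) (htptc : tp < tc) (htcT : tc < T)
    (δ : ℝ → EuclideanSpace ℝ (Fin n)) (hδ : ∀ t, ‖δ t‖ ≤ Δ)
    (ε : ℝ → EuclideanSpace ℝ (Fin n))
    (t : ℝ) (ht : t ∈ Set.Ioo tc T)
    (hdyn : ∀ᶠ s in nhds t, ε s ≠ 0 ∧
      HasDerivAt ε
        (-((tp - s)⁻¹ • ε s +
           ((ζ + γ * s ^ (α - 1) * ‖ε s‖ ^ 2 / (tp - s) ^ 2) * ‖ε s‖⁻¹) • ε s) + δ s) s)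
    (V : ℝ → ℝ) (hV : ∀ s, V s = ‖ε s‖ / (s - tp)) :
    DifferentiableAt ℝ V t ∧
    deriv V t ≤ -(γ * t ^ (α - 1) * (V t) ^ 2 / (t - tp)) - (ζ - Δ) / (t - tp) ∧
    -(γ * t ^ (α - 1) * (V t) ^ 2 / (t - tp)) - (ζ - Δ) / (t - tp) < 0 := by
  obtain rfl : V = foznnLyapunov tp ε := funext hV
  obtain ⟨hne, hderiv⟩ := hdyn.self_of_nhds
  have hgain : 0 ≤ γ * t ^ (α - 1) :=
    mul_nonneg hγ.le (Real.rpow_nonneg (htp.trans (htptc.trans ht.1)).le _)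
  exact foznn_noisy_maintenance_lyapunov_general hgain hΔζ (htptc.trans ht.1) (hδ t) hne
    (differentiableAt_id.norm ℝ hne) hderiv
end
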